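/- (Predictable covariation between the RWI position martingale and sign martingale.) Let ε_n = 1_{S_n∈V_0} − 1_{S_n∈V_1} and I_n = Σ_{k=0}^n ε_k. Then for every n ≥ 0, almost surely E[ξ_{n+1}·ε_{n+1} | F_n] = (2ζ − E[ξ_{n+1} | F_n])·ε_n, and for every n ≥ 1, almost surely Σ_{k=1}^n ( E[ξ_k ε_k | F_{k−1}] − E[ξ_k | F_{k−1}]·E[ε_k | F_{k−1}] ) = −2np·θ + 2(ζ − p·μ)·I_{n−1}. -/

import Mathlib

open MeasureTheory ProbabilityTheory Real Filter Set
open scoped BigOperators NNReal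

noncomputable section

namespace RWI

abbrev E : Type := EuclideanSpace ℝ (Fin 3)

def vec (x y z : ℝ) : E := (EuclideanSpace.equiv (Fin 3) ℝ).symm ![x, y, z]

/-- The two families of vertices of the `1h` ice lattice. -/
def V (a h : ℝ) (i : Fin 2) : Set E :=
  {v | ∃ k l n : ℤ, v = vec (a * ((i : ℕ) + (3 / 2) * k))
      (a * ((Real.sqrt 3 / 2) * k + Real.sqrt 3 * l)) (h * n)}

/-- Horizontal jump from a vertex of type `i` in direction `j`. -/
def w (a : ℝ) (i : Fin 2) (j : Fin 3) : E :=
  vec (a * Real.cos (2 * (j : ℕ) * π / 3 + (i : ℕ) * π))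
      (a * Real.sin (2 * (j : ℕ) * π / 3 + (i : ℕ) * π)) 0

/-- `S` is a random walk on ice with parameters `a, h, p, α, q` and natural filtration `F`. -/
structure IsRWI {Ω : Type} [MeasurableSpace Ω] (P : Measure Ω)
    (a h p α : ℝ) (q : Fin 2 → Fin 3 → ℝ)
    (S : ℕ → Ω → E) (F : ℕ → MeasurableSpace Ω) : Prop where
  prob : IsProbabilityMeasure P
  ha : 0 < a
  hh : 0 < h
  hp0 : 0 ≤ p
  hp1 : p ≤ 1
  hα0 : 0 < α
  hα1 : α < 1
  hq : ∀ i j, 0 ≤ q i j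
  hqsum : ∀ i, q i 0 + q i 1 + q i 2 = 1 - p
  hS0 : ∀ ω, S 0 ω = 0
  hSmeas : ∀ n, Measurable (S n)
  hF : ∀ n, F n =
    MeasurableSpace.comap (fun ω (k : Fin n) => S ((k : ℕ) + 1) ω - S (k : ℕ) ω)
      MeasurableSpace.pi
  hTrans : ∀ (n : ℕ) (f : E → ℝ), Measurable f → (∃ C, ∀ x, |f x| ≤ C) →
    P[fun ω => f (S (n + 1) ω)|F n] =ᵐ[P]
      fun ω => ∑ i : Fin 2, (V a h i).indicator (fun _ => (1 : ℝ)) (S n ω) *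
        (α * p * f (S n ω + vec 0 0 h) + (1 - α) * p * f (S n ω + vec 0 0 (-h)) +
          ∑ j : Fin 3, q i j * f (S n ω + w a i j))

def uu (q : Fin 2 → Fin 3 → ℝ) (i : Fin 2) : ℝ := q i 1 + q i 2

def vv (q : Fin 2 → Fin 3 → ℝ) (i : Fin 2) : ℝ := q i 1 - q i 2

/-- The drift vector `μ` of the RWI. -/
def muI (a h p α : ℝ) (q : Fin 2 → Fin 3 → ℝ) : E :=
  vec (3 * a / 4 * (-(uu q 0) + uu q 1)) (a * Real.sqrt 3 / 4 * (vv q 0 - vv q 1))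
    (h * p * (2 * α - 1))

/-- The vector `θ` of the RWI. -/
def thetaI (a p : ℝ) (q : Fin 2 → Fin 3 → ℝ) : E :=
  vec (a * ((1 - p) - 3 / 4 * (uu q 0 + uu q 1))) (a * Real.sqrt 3 / 4 * (vv q 0 + vv q 1)) 0

/-- The sign process `ε_n = 1_{S_n ∈ V_0} - 1_{S_n ∈ V_1}`. -/
def epsI {Ω : Type} (a h : ℝ) (S : ℕ → Ω → E) (n : ℕ) (ω : Ω) : ℝ :=
  (V a h 0).indicator (fun _ => (1 : ℝ)) (S n ω) - (V a h 1).indicator (fun _ => (1 : ℝ)) (S n ω)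

end RWI

namespace RWI

/-- The vector `ζ = (0, 0, hp(2α−1))`. -/
def zetaI (h p α : ℝ) : E := vec 0 0 (h * p * (2 * α - 1))

/-- `I_n = ∑_{k=0}^n ε_k`. -/
def II {Ω : Type} (a h : ℝ) (S : ℕ → Ω → E) (n : ℕ) (ω : Ω) : ℝ :=
  ∑ k ∈ Finset.range (n + 1), epsI a h S k ω

end RWI

namespace RWI

lemma vec_add (x y z x' y' z' : ℝ) :
    vec x y z + vec x' y' z' = vec (x + x') (y + y') (z + z') := by
  ext i
  fin_cases i <;> simp [vec]

lemma vec_smul (c x y z : ℝ) : c • vec x y z = vec (c * x) (c * y) (c * z) := by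
  ext i
  fin_cases i <;> simp [vec]

lemma measurableSet_V (a h : ℝ) (i : Fin 2) : MeasurableSet (V a h i) := by
  have hrange : V a h i = Set.range (fun t : ℤ × ℤ × ℤ =>
      vec (a * ((i : ℕ) + (3 / 2) * t.1))
        (a * ((Real.sqrt 3 / 2) * t.1 + Real.sqrt 3 * t.2.1)) (h * t.2.2)) := by
    ext v
    constructor
    · rintro ⟨k, l, n, rfl⟩
      exact ⟨(k, l, n), rfl⟩
    · rintro ⟨⟨k, l, n⟩, rfl⟩
      exact ⟨k, l, n, rfl⟩
  rw [hrange]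
  exact (Set.countable_range _).measurableSet

lemma notMem_V_one {a h : ℝ} (ha : 0 < a) {x : E} (hx : x ∈ V a h 0) : x ∉ V a h 1 := by
  obtain ⟨k, l, n, rfl⟩ := hx
  rintro ⟨k', l', n', h'⟩
  have h0 := congrArg (fun v : E => v 0) h'
  simp only [vec, Fin.isValue, Fin.val_zero, Fin.val_one] at h0
  have h1 : a * ((0 : ℕ) + 3 / 2 * (k : ℝ)) = a * ((1 : ℕ) + 3 / 2 * (k' : ℝ)) := by
    simpa using h0
  have h2 := mul_left_cancel₀ ha.ne' h1
  have h3 : (3 * k : ℝ) = 2 + 3 * k' := by push_cast at h2; linarith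
  have h4 : 3 * k = 2 + 3 * k' := by exact_mod_cast h3
  omega

/-- The sign of a point of the lattice: `1` on `V 0`, `-1` on `V 1`, and `0` elsewhere. -/
def sgn (a h : ℝ) (x : E) : ℝ :=
  (V a h 0).indicator (fun _ => (1 : ℝ)) x - (V a h 1).indicator (fun _ => (1 : ℝ)) x

lemma sgn_of_mem_zero {a h : ℝ} (ha : 0 < a) {x : E} (hx : x ∈ V a h 0) : sgn a h x = 1 := by
  simp [sgn, hx, notMem_V_one ha hx]

lemma sgn_of_mem_one {a h : ℝ} (ha : 0 < a) {x : E} (hx : x ∈ V a h 1) : sgn a h x = -1 := by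
  have h0 : x ∉ V a h 0 := fun h0 => notMem_V_one ha h0 hx
  simp [sgn, hx, h0]

lemma measurable_sgn (a h : ℝ) : Measurable (sgn a h) :=
  (measurable_const.indicator (measurableSet_V a h 0)).sub
    (measurable_const.indicator (measurableSet_V a h 1))

lemma abs_sgn_le {a h : ℝ} (ha : 0 < a) (x : E) : |sgn a h x| ≤ 1 := by
  by_cases h0 : x ∈ V a h 0
  · simp [sgn_of_mem_zero ha h0]
  by_cases h1 : x ∈ V a h 1
  · simp [sgn_of_mem_one ha h1]
  simp [sgn, h0, h1]

lemma add_up_mem_V {a h : ℝ} {i : Fin 2} {x : E} (hx : x ∈ V a h i) :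
    x + vec 0 0 h ∈ V a h i := by
  obtain ⟨k, l, n, rfl⟩ := hx
  refine ⟨k, l, n + 1, ?_⟩
  rw [vec_add]
  push_cast
  congr 1 <;> ring

lemma add_down_mem_V {a h : ℝ} {i : Fin 2} {x : E} (hx : x ∈ V a h i) :
    x + vec 0 0 (-h) ∈ V a h i := by
  obtain ⟨k, l, n, rfl⟩ := hx
  refine ⟨k, l, n - 1, ?_⟩
  rw [vec_add]
  push_cast
  congr 1 <;> ring

lemma cos_two_pi_div_three : Real.cos (2 * π / 3) = -1 / 2 := by
  rw [show 2 * π / 3 = π - π / 3 by ring, Real.cos_pi_sub, Real.cos_pi_div_three]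
  ring

lemma sin_two_pi_div_three : Real.sin (2 * π / 3) = Real.sqrt 3 / 2 := by
  rw [show 2 * π / 3 = π - π / 3 by ring, Real.sin_pi_sub, Real.sin_pi_div_three]

lemma cos_four_pi_div_three : Real.cos (2 * 2 * π / 3) = -1 / 2 := by
  rw [show 2 * 2 * π / 3 = π / 3 + π by ring, Real.cos_add_pi, Real.cos_pi_div_three]
  ring

lemma sin_four_pi_div_three : Real.sin (2 * 2 * π / 3) = -(Real.sqrt 3 / 2) := by
  rw [show 2 * 2 * π / 3 = π / 3 + π by ring, Real.sin_add_pi, Real.sin_pi_div_three]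

lemma w_zero_zero (a : ℝ) : w a 0 0 = vec a 0 0 := by
  simp [w]

lemma w_zero_one (a : ℝ) : w a 0 1 = vec (-a / 2) (a * (Real.sqrt 3 / 2)) 0 := by
  simp [w, cos_two_pi_div_three, sin_two_pi_div_three]
  ring_nf

lemma w_zero_two (a : ℝ) : w a 0 2 = vec (-a / 2) (-(a * (Real.sqrt 3 / 2))) 0 := by
  simp [w, cos_four_pi_div_three, sin_four_pi_div_three]
  ring_nf

lemma w_one (a : ℝ) (j : Fin 3) : w a 1 j = (-1 : ℝ) • w a 0 j := by
  simp only [w, vec_smul]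
  simp [Real.cos_add_pi, Real.sin_add_pi]

lemma add_w_zero_mem_V {a h : ℝ} {x : E} (hx : x ∈ V a h 0) (j : Fin 3) :
    x + w a 0 j ∈ V a h 1 := by
  obtain ⟨k, l, n, rfl⟩ := hx
  fin_cases j
  · refine ⟨k, l, n, ?_⟩
    simp only [Fin.zero_eta, w_zero_zero, vec_add]
    simp
    congr 1; ring
  · refine ⟨k - 1, l + 1, n, ?_⟩
    simp only [Fin.mk_one, w_zero_one, vec_add]
    simp
    congr 1 <;> ring
  · refine ⟨k - 1, l, n, ?_⟩
    simp only [Fin.reduceFinMk, w_zero_two, vec_add]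
    simp
    congr 1 <;> ring

lemma add_w_one_mem_V {a h : ℝ} {x : E} (hx : x ∈ V a h 1) (j : Fin 3) :
    x + w a 1 j ∈ V a h 0 := by
  obtain ⟨k, l, n, rfl⟩ := hx
  fin_cases j
  · refine ⟨k, l, n, ?_⟩
    simp only [Fin.zero_eta, w_one, w_zero_zero, vec_smul, vec_add]
    simp
    congr 1; ring
  · refine ⟨k + 1, l - 1, n, ?_⟩
    simp only [Fin.mk_one, w_one, w_zero_one, vec_smul, vec_add]
    simp
    congr 1 <;> ring
  · refine ⟨k + 1, l, n, ?_⟩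
    simp only [Fin.reduceFinMk, w_one, w_zero_two, vec_smul, vec_add]
    simp
    congr 1 <;> ring

/-- The mean horizontal jump from a vertex of type `i`. -/
def hjump (a : ℝ) (q : Fin 2 → Fin 3 → ℝ) (i : Fin 2) : E := ∑ j : Fin 3, q i j • w a i j

lemma hjump_zero {a h p α : ℝ} {q : Fin 2 → Fin 3 → ℝ} (hq : q 0 0 + q 0 1 + q 0 2 = 1 - p) :
    hjump a q 0 = thetaI a p q + (muI a h p α q - zetaI h p α) := by
  have hq0 : q 0 0 = 1 - p - q 0 1 - q 0 2 := by linarith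
  simp only [hjump, Fin.sum_univ_three, w_zero_zero, w_zero_one, w_zero_two, hq0]
  ext i
  fin_cases i <;> simp [vec, thetaI, muI, zetaI, uu, vv] <;> ring

lemma hjump_one {a h p α : ℝ} {q : Fin 2 → Fin 3 → ℝ} (hq : q 1 0 + q 1 1 + q 1 2 = 1 - p) :
    hjump a q 1 = -thetaI a p q + (muI a h p α q - zetaI h p α) := by
  have hq0 : q 1 0 = 1 - p - q 1 1 - q 1 2 := by linarith
  simp only [hjump, Fin.sum_univ_three, w_one, w_zero_zero, w_zero_one, w_zero_two, hq0]
  ext i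
  fin_cases i <;> simp [vec, thetaI, muI, zetaI, uu, vv] <;> ring

lemma smul_up_add_smul_down (h p α : ℝ) :
    (α * p) • vec 0 0 h + ((1 - α) * p) • vec 0 0 (-h) = zetaI h p α := by
  rw [vec_smul, vec_smul, vec_add, zetaI]
  congr 1 <;> ring

/-- The transition operator of the walk, acting on real functions. -/
def step (a h p α : ℝ) (q : Fin 2 → Fin 3 → ℝ) (f : E → ℝ) (x : E) : ℝ :=
  ∑ i : Fin 2, (V a h i).indicator (fun _ => (1 : ℝ)) x *
    (α * p * f (x + vec 0 0 h) + (1 - α) * p * f (x + vec 0 0 (-h)) +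
      ∑ j : Fin 3, q i j * f (x + w a i j))

lemma exists_jump_bound (a h : ℝ) :
    ∃ K, ‖vec 0 0 h‖ ≤ K ∧ ‖vec 0 0 (-h)‖ ≤ K ∧ ∀ i j, ‖w a i j‖ ≤ K := by
  obtain ⟨K, hK⟩ := (Set.finite_range fun t : Fin 2 × Fin 3 => ‖w a t.1 t.2‖).bddAbove
  refine ⟨max K (max ‖vec 0 0 h‖ ‖vec 0 0 (-h)‖), by simp, by simp, fun i j => ?_⟩
  exact le_max_of_le_left (hK ⟨(i, j), rfl⟩)

lemma step_congr {a h p α : ℝ} {q : Fin 2 → Fin 3 → ℝ} {K R : ℝ}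
    (hK : ‖vec 0 0 h‖ ≤ K ∧ ‖vec 0 0 (-h)‖ ≤ K ∧ ∀ i j, ‖w a i j‖ ≤ K) {f g : E → ℝ}
    (hfg : ∀ x, ‖x‖ ≤ R + K → f x = g x) {x : E} (hx : ‖x‖ ≤ R) :
    step a h p α q f x = step a h p α q g x := by
  have key : ∀ v : E, ‖v‖ ≤ K → f (x + v) = g (x + v) := fun v hv =>
    hfg _ ((norm_add_le x v).trans (add_le_add hx hv))
  simp only [step, key _ hK.1, key _ hK.2.1, key _ (hK.2.2 _ _)]

namespace IsRWI

variable {Ω : Type} [MeasurableSpace Ω] {P : Measure Ω} {a h p α : ℝ} {q : Fin 2 → Fin 3 → ℝ}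
  {S : ℕ → Ω → E} {F : ℕ → MeasurableSpace Ω}

lemma filtration_le (hRW : IsRWI P a h p α q S F) (n : ℕ) : F n ≤ ‹MeasurableSpace Ω› := by
  rw [hRW.hF n]
  exact (measurable_pi_lambda _ fun k =>
    (hRW.hSmeas _).sub (hRW.hSmeas _)).comap_le

lemma measurable_position (hRW : IsRWI P a h p α q S F) (n : ℕ) : Measurable[F n] (S n) := by
  have hsum : S n = fun ω => ∑ k : Fin n, (S ((k : ℕ) + 1) ω - S (k : ℕ) ω) := by
    funext ω
    rw [Fin.sum_univ_eq_sum_range (fun k => S (k + 1) ω - S k ω) n,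
      Finset.sum_range_sub (fun k => S k ω), hRW.hS0, sub_zero]
  have hX : Measurable[F n] (fun ω (k : Fin n) => S ((k : ℕ) + 1) ω - S (k : ℕ) ω) := by
    rw [hRW.hF n]
    exact comap_measurable _
  have hadd : Measurable fun v : Fin n → E => ∑ k, v k := by fun_prop
  rw [hsum]
  exact hadd.comp hX

lemma ae_mem_V (hRW : IsRWI P a h p α q S F) (n : ℕ) :
    ∀ᵐ ω ∂P, S n ω ∈ V a h 0 ∨ S n ω ∈ V a h 1 := by
  have := hRW.prob
  have h1 := hRW.hTrans n (fun _ => 1) measurable_const ⟨1, by simp⟩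
  rw [condExp_const (hRW.filtration_le n)] at h1
  filter_upwards [h1] with ω hω
  by_contra hV
  push Not at hV
  simp [hV.1, hV.2] at hω

lemma ae_norm_le (hRW : IsRWI P a h p α q S F) {K : ℝ}
    (hK : ‖vec 0 0 h‖ ≤ K ∧ ‖vec 0 0 (-h)‖ ≤ K ∧ ∀ i j, ‖w a i j‖ ≤ K) (n : ℕ) :
    ∀ᵐ ω ∂P, ‖S n ω‖ ≤ n * K := by
  have := hRW.prob
  induction n with
  | zero => simp [hRW.hS0]
  | succ n ih =>
    set B : Set E := {x | ‖x‖ ≤ n * K + K}ᶜ with hB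
    have hBm : MeasurableSet B := (measurableSet_le measurable_norm measurable_const).compl
    have hfm : Measurable (B.indicator fun _ => (1 : ℝ)) := measurable_const.indicator hBm
    have hfb : ∀ x, |B.indicator (fun _ => (1 : ℝ)) x| ≤ 1 := fun x => by
      by_cases hx : x ∈ B <;> simp [hx]
    have htr := hRW.hTrans n _ hfm ⟨1, hfb⟩
    have hzero : P[fun ω => B.indicator (fun _ => (1 : ℝ)) (S (n + 1) ω)|F n] =ᵐ[P]
        fun _ => (0 : ℝ) := by
      filter_upwards [htr, ih] with ω h1 h2
      rw [h1]
      change step a h p α q _ _ = 0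
      rw [step_congr hK (g := fun _ => 0) (fun x hx => by simp [hB, hx]) h2]
      simp [step]
    have hintegral : ∫ ω, B.indicator (fun _ => (1 : ℝ)) (S (n + 1) ω) ∂P = 0 := by
      rw [← integral_condExp (hRW.filtration_le n), integral_congr_ae hzero]
      simp
    have hI : Integrable (fun ω => B.indicator (fun _ => (1 : ℝ)) (S (n + 1) ω)) P :=
      Integrable.of_bound (hfm.comp (hRW.hSmeas _)).aestronglyMeasurable 1
        (ae_of_all _ fun ω => hfb _)
    have hae := (integral_eq_zero_iff_of_nonneg
      (fun ω => Set.indicator_nonneg (fun _ _ => zero_le_one) _) hI).1 hintegral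
    filter_upwards [hae] with ω hω
    by_contra hnot
    have hmem : S (n + 1) ω ∈ B := by
      simp only [hB, Set.mem_compl_iff, Set.mem_ofPred_eq]
      push_cast at hnot
      linarith
    simp [hmem] at hω

lemma integrable_comp (hRW : IsRWI P a h p α q S F) (n : ℕ) {G : Type*} [NormedAddCommGroup G]
    {f : E → G} (hf : StronglyMeasurable f) (hfb : ∀ R, ∃ C, ∀ x, ‖x‖ ≤ R → ‖f x‖ ≤ C) :
    Integrable (fun ω => f (S n ω)) P := by
  have := hRW.prob
  obtain ⟨K, hK⟩ := exists_jump_bound a h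
  obtain ⟨C, hC⟩ := hfb (n * K)
  refine Integrable.of_bound (hf.comp_measurable (hRW.hSmeas n)).aestronglyMeasurable C ?_
  filter_upwards [hRW.ae_norm_le hK n] with ω hω using hC _ hω

lemma condExp_comp (hRW : IsRWI P a h p α q S F) (n : ℕ) {f : E → ℝ} (hf : Measurable f)
    (hfb : ∀ R, ∃ C, ∀ x, ‖x‖ ≤ R → |f x| ≤ C) :
    P[fun ω => f (S (n + 1) ω)|F n] =ᵐ[P] fun ω => step a h p α q f (S n ω) := by
  have := hRW.prob
  obtain ⟨K, hK⟩ := exists_jump_bound a h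
  set B : Set E := {x | ‖x‖ ≤ n * K + K} with hB
  have hBm : MeasurableSet B := measurableSet_le measurable_norm measurable_const
  obtain ⟨C, hC⟩ := hfb (n * K + K)
  have htr := hRW.hTrans n (B.indicator f) (hf.indicator hBm) ⟨max C 0, fun x => by
    by_cases hx : x ∈ B
    · simpa [hx] using Or.inl (hC x hx)
    · simp [hx]⟩
  have hcongr : (fun ω => f (S (n + 1) ω)) =ᵐ[P] fun ω => B.indicator f (S (n + 1) ω) := by
    filter_upwards [hRW.ae_norm_le hK (n + 1)] with ω hω
    have hmem : S (n + 1) ω ∈ B := by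
      simp only [hB, Set.mem_ofPred_eq]
      push_cast at hω
      linarith
    simp [hmem]
  filter_upwards [condExp_congr_ae (m := F n) hcongr, htr, hRW.ae_norm_le hK n]
    with ω h1 h2 h3
  rw [h1, h2]
  exact step_congr hK (fun x hx => by simp [hB, hx]) h3

/-- Conditional expectation of the increment weighted by a bounded function of the new position. -/
lemma condExp_smul_increment (hRW : IsRWI P a h p α q S F) (n : ℕ) {g : E → ℝ}
    (hg : Measurable g) {C : ℝ} (hgb : ∀ x, |g x| ≤ C) :
    P[fun ω => g (S (n + 1) ω) • (S (n + 1) ω - S n ω)|F n] =ᵐ[P] fun ω =>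
      ∑ i : Fin 2, (V a h i).indicator (fun _ => (1 : ℝ)) (S n ω) •
        ((α * p * g (S n ω + vec 0 0 h)) • vec 0 0 h +
          ((1 - α) * p * g (S n ω + vec 0 0 (-h))) • vec 0 0 (-h) +
          ∑ j : Fin 3, (q i j * g (S n ω + w a i j)) • w a i j) := by
  have := hRW.prob
  have hC : 0 ≤ C := (abs_nonneg _).trans (hgb 0)
  have hid : ∀ m, Integrable (S m) P := fun m =>
    hRW.integrable_comp m (f := fun x => x) stronglyMeasurable_id fun R => ⟨R, fun x hx => hx⟩
  have hgi : Integrable (fun ω => g (S (n + 1) ω)) P :=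
    hRW.integrable_comp _ hg.stronglyMeasurable fun R => ⟨C, fun x _ => hgb x⟩
  have hgm : AEStronglyMeasurable (fun ω => g (S (n + 1) ω)) P := hgi.aestronglyMeasurable
  have hXi : Integrable (fun ω => g (S (n + 1) ω) • (S (n + 1) ω - S n ω)) P :=
    ((hid (n + 1)).sub (hid n)).bdd_smul C hgm (ae_of_all _ fun ω => hgb _)
  have hcoord : ∀ c : Fin 3, ∀ᵐ ω ∂P,
      (P[fun ω => g (S (n + 1) ω) • (S (n + 1) ω - S n ω)|F n]) ω c =
        step a h p α q (fun x => g x * x c) (S n ω) - S n ω c * step a h p α q g (S n ω) := by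
    intro c
    have hci : ∀ m, Integrable (fun ω => S m ω c) P := fun m =>
      (EuclideanSpace.proj (𝕜 := ℝ) c : E →L[ℝ] ℝ).integrable_comp (hid m)
    have hgc : ∀ m, Integrable (fun ω => g (S (n + 1) ω) * S m ω c) P := fun m =>
      (hci m).bdd_mul hgm (ae_of_all _ fun ω => hgb _)
    have h1 := (EuclideanSpace.proj (𝕜 := ℝ) c : E →L[ℝ] ℝ).comp_condExp_comm (m := F n) hXi
    have h2 : (EuclideanSpace.proj (𝕜 := ℝ) c : E →L[ℝ] ℝ) ∘
        (fun ω => g (S (n + 1) ω) • (S (n + 1) ω - S n ω)) =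
        (fun ω => g (S (n + 1) ω) * S (n + 1) ω c) -
          ((fun ω => S n ω c) * fun ω => g (S (n + 1) ω)) := by
      funext ω
      simp
      ring
    have hgc' : Integrable ((fun ω => S n ω c) * fun ω => g (S (n + 1) ω)) P :=
      (hgc n).congr (ae_of_all _ fun ω => mul_comm _ _)
    have hSc : StronglyMeasurable[F n] fun ω => S n ω c :=
      (((EuclideanSpace.proj (𝕜 := ℝ) c : E →L[ℝ] ℝ).measurable).comp
        (hRW.measurable_position n)).stronglyMeasurable
    rw [h2] at h1
    have h3 := condExp_sub (hgc (n + 1)) hgc' (F n)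
    have h4 := condExp_mul_of_stronglyMeasurable_left hSc hgc' hgi
    have h5 := hRW.condExp_comp n hg fun R => ⟨C, fun x _ => hgb x⟩
    have h6 := hRW.condExp_comp n (f := fun x => g x * x c) (hg.mul (by fun_prop)) fun R =>
      ⟨C * R, fun x hx => by
        rw [abs_mul]
        exact mul_le_mul (hgb x) ((PiLp.norm_apply_le x c).trans hx) (abs_nonneg _) hC⟩
    filter_upwards [h1, h3, h4, h5, h6] with ω h1 h3 h4 h5 h6
    simp only [Function.comp_apply, PiLp.proj_apply] at h1
    rw [h1, h3, Pi.sub_apply, h4, Pi.mul_apply, h5, h6]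
  filter_upwards [ae_all_iff.2 hcoord] with ω hω
  ext c
  rw [hω c]
  simp [step, Fin.sum_univ_three, Fin.sum_univ_two]
  ring

lemma condExp_increment (hRW : IsRWI P a h p α q S F) (n : ℕ) :
    ∀ᵐ ω ∂P, (P[fun ω' => S (n + 1) ω' - S n ω'|F n]) ω =
      muI a h p α q + epsI a h S n ω • thetaI a p q := by
  have h1 := hRW.condExp_smul_increment n (g := fun _ => 1) measurable_const (C := 1) (by simp)
  simp only [one_smul, mul_one] at h1
  filter_upwards [h1, hRW.ae_mem_V n] with ω h1 hV
  rw [h1]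
  simp only [smul_up_add_smul_down, ← hjump.eq_1 a q, Fin.sum_univ_two]
  rcases hV with h0 | h0
  · rw [show epsI a h S n ω = 1 from sgn_of_mem_zero hRW.ha h0,
      hjump_zero (h := h) (α := α) (hRW.hqsum 0)]
    simp only [h0, notMem_V_one hRW.ha h0, Set.indicator_of_mem, Set.indicator_of_notMem,
      not_false_eq_true]
    module
  · have h0' : S n ω ∉ V a h 0 := fun h' => notMem_V_one hRW.ha h' h0
    rw [show epsI a h S n ω = -1 from sgn_of_mem_one hRW.ha h0,
      hjump_one (h := h) (α := α) (hRW.hqsum 1)]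
    simp only [h0, h0', Set.indicator_of_mem, Set.indicator_of_notMem, not_false_eq_true]
    module

lemma epsI_mul_self (hRW : IsRWI P a h p α q S F) (n : ℕ) :
    ∀ᵐ ω ∂P, epsI a h S n ω * epsI a h S n ω = 1 := by
  filter_upwards [hRW.ae_mem_V n] with ω hV
  rcases hV with h0 | h0
  · rw [show epsI a h S n ω = 1 from sgn_of_mem_zero hRW.ha h0, one_mul]
  · rw [show epsI a h S n ω = -1 from sgn_of_mem_one hRW.ha h0]
    norm_num

lemma condExp_epsI (hRW : IsRWI P a h p α q S F) (n : ℕ) :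
    ∀ᵐ ω ∂P, (P[fun ω' => epsI a h S (n + 1) ω'|F n]) ω = (2 * p - 1) * epsI a h S n ω := by
  have h1 := hRW.condExp_comp n (measurable_sgn a h) fun R => ⟨1, fun x _ => abs_sgn_le hRW.ha x⟩
  filter_upwards [h1, hRW.ae_mem_V n] with ω h1 hV
  refine h1.trans ?_
  rcases hV with h0 | h0
  · rw [show epsI a h S n ω = 1 from sgn_of_mem_zero hRW.ha h0]
    simp only [step, Fin.sum_univ_two, h0, notMem_V_one hRW.ha h0, Set.indicator_of_mem,
      Set.indicator_of_notMem, not_false_eq_true, sgn_of_mem_zero hRW.ha (add_up_mem_V h0),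
      sgn_of_mem_zero hRW.ha (add_down_mem_V h0),
      sgn_of_mem_one hRW.ha (add_w_zero_mem_V h0 _), Fin.sum_univ_three]
    linear_combination -hRW.hqsum 0
  · have h0' : S n ω ∉ V a h 0 := fun h' => notMem_V_one hRW.ha h' h0
    rw [show epsI a h S n ω = -1 from sgn_of_mem_one hRW.ha h0]
    simp only [step, Fin.sum_univ_two, h0, h0', Set.indicator_of_mem,
      Set.indicator_of_notMem, not_false_eq_true, sgn_of_mem_one hRW.ha (add_up_mem_V h0),
      sgn_of_mem_one hRW.ha (add_down_mem_V h0),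
      sgn_of_mem_zero hRW.ha (add_w_one_mem_V h0 _), Fin.sum_univ_three]
    linear_combination hRW.hqsum 1

lemma condExp_epsI_smul_increment (hRW : IsRWI P a h p α q S F) (n : ℕ) :
    ∀ᵐ ω ∂P, (P[fun ω' => epsI a h S (n + 1) ω' • (S (n + 1) ω' - S n ω')|F n]) ω =
      epsI a h S n ω • ((2 : ℝ) • zetaI h p α -
        (muI a h p α q + epsI a h S n ω • thetaI a p q)) := by
  have h1 := hRW.condExp_smul_increment n (measurable_sgn a h) (abs_sgn_le hRW.ha)
  filter_upwards [h1, hRW.ae_mem_V n] with ω h1 hV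
  refine h1.trans ?_
  have hζ := smul_up_add_smul_down h p α
  rcases hV with h0 | h0
  · rw [show epsI a h S n ω = 1 from sgn_of_mem_zero hRW.ha h0]
    have hj := hjump_zero (a := a) (h := h) (α := α) (hRW.hqsum 0)
    simp only [Fin.sum_univ_two, h0, notMem_V_one hRW.ha h0, Set.indicator_of_mem,
      Set.indicator_of_notMem, not_false_eq_true, sgn_of_mem_zero hRW.ha (add_up_mem_V h0),
      sgn_of_mem_zero hRW.ha (add_down_mem_V h0),
      sgn_of_mem_one hRW.ha (add_w_zero_mem_V h0 _)]
    rw [hjump] at hj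
    simp only [mul_one, mul_neg, neg_smul, Finset.sum_neg_distrib, hj, hζ]
    module
  · have h0' : S n ω ∉ V a h 0 := fun h' => notMem_V_one hRW.ha h' h0
    rw [show epsI a h S n ω = -1 from sgn_of_mem_one hRW.ha h0]
    have hj := hjump_one (a := a) (h := h) (α := α) (hRW.hqsum 1)
    simp only [Fin.sum_univ_two, h0, h0', Set.indicator_of_mem,
      Set.indicator_of_notMem, not_false_eq_true, sgn_of_mem_one hRW.ha (add_up_mem_V h0),
      sgn_of_mem_one hRW.ha (add_down_mem_V h0),
      sgn_of_mem_zero hRW.ha (add_w_one_mem_V h0 _)]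
    rw [hjump] at hj
    simp only [mul_one, mul_neg, neg_smul, hj, ← hζ]
    module

lemma covariation_increment (hRW : IsRWI P a h p α q S F) (n : ℕ) :
    ∀ᵐ ω ∂P, (P[fun ω' => epsI a h S (n + 1) ω' • (S (n + 1) ω' - S n ω')|F n]) ω -
        (P[fun ω' => epsI a h S (n + 1) ω'|F n]) ω • (P[fun ω' => S (n + 1) ω' - S n ω'|F n]) ω =
      (-(2 * p)) • thetaI a p q +
        (2 * epsI a h S n ω) • (zetaI h p α - p • muI a h p α q) := by
  filter_upwards [hRW.condExp_epsI_smul_increment n, hRW.condExp_epsI n, hRW.condExp_increment n,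
    hRW.epsI_mul_self n] with ω h1 h2 h3 h4
  rw [h1, h2, h3]
  linear_combination (norm := module) (-(2 * p)) • congrArg (fun t : ℝ => t • thetaI a p q) h4

end IsRWI

end RWI

theorem rwi_covariation {Ω : Type} [MeasurableSpace Ω] (P : Measure Ω)
    (a h p α : ℝ) (q : Fin 2 → Fin 3 → ℝ)
    (S : ℕ → Ω → RWI.E) (F : ℕ → MeasurableSpace Ω)
    (hRW : RWI.IsRWI P a h p α q S F) :
    (∀ n : ℕ, P[fun ω => RWI.epsI a h S (n + 1) ω • (S (n + 1) ω - S n ω)|F n] =ᵐ[P]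
      fun ω => RWI.epsI a h S n ω •
        ((2 : ℝ) • RWI.zetaI h p α - (P[fun ω' => S (n + 1) ω' - S n ω'|F n]) ω)) ∧
    (∀ n : ℕ, 1 ≤ n → ∀ᵐ ω ∂P,
      ∑ k ∈ Finset.Icc 1 n,
        ((P[fun ω' => RWI.epsI a h S k ω' • (S k ω' - S (k - 1) ω')|F (k - 1)]) ω -
          (P[fun ω' => RWI.epsI a h S k ω'|F (k - 1)]) ω •
            (P[fun ω' => S k ω' - S (k - 1) ω'|F (k - 1)]) ω) =
        (-(2 * n * p)) • RWI.thetaI a p q +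
          (2 * RWI.II a h S (n - 1) ω) • (RWI.zetaI h p α - p • RWI.muI a h p α q)) := by
  refine ⟨fun n => ?_, fun n hn => ?_⟩
  · filter_upwards [hRW.condExp_epsI_smul_increment n, hRW.condExp_increment n] with ω h1 h2
    rw [h1, h2]
  · filter_upwards [ae_all_iff.2 hRW.covariation_increment] with ω hω
    have hIcc : Finset.Icc 1 n = Finset.Ico (0 + 1) (n + 1) := by ext; simp
    rw [hIcc, ← Finset.sum_Ico_add', ← Finset.range_eq_Ico]
    simp only [Nat.add_sub_cancel, hω, Finset.sum_add_distrib, Finset.sum_const,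
      Finset.card_range, ← Finset.sum_smul, ← Finset.mul_sum]
    rw [RWI.II, Nat.sub_add_cancel hn, ← Nat.cast_smul_eq_nsmul ℝ, smul_smul]
    congr 2
    ring
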